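/- Let V ⊆ ℝ^k be a linear subspace with dim V = s, and let H be a finite set of h affine hyperplanes in ℝ^k. Then the set V \ ⋃H has at most ∑_{i=0}^{s} C(h, i) connected components, where C(h,i) denotes the binomial coefficient. -/

import Mathlib

open scoped RealInnerProductSpace

/-- An affine hyperplane in `ℝ^k`: a set `{x | ⟪a, x⟫ = b}` with `a ≠ 0`. -/
def IsAffineHyperplane {k : ℕ} (H : Set (EuclideanSpace ℝ (Fin k))) : Prop :=
  ∃ (a : EuclideanSpace ℝ (Fin k)) (b : ℝ), a ≠ 0 ∧ H = {x | ⟪a, x⟫ = b}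

/-!
Cut a convex set `C` by the zero sets of affine functions `f i`, and record for each remaining
point the set of indices at which it lies on the positive side. The points with a given record form
a convex, hence connected, set, so there are at most as many components as records. By the
Sauer–Shelah lemma it is enough that the family of records shatters no set `T` of indices with
`#T > dim C`. For such a `T` some nontrivial combination `∑ i ∈ T, c i * f i` is constant on `C`;
if `T` were shattered, a point whose record on `T` is the sign pattern of `c` would make this
constant positive, and a point with the opposite record would make it negative.
-/

section PosSupport

variable {ι 𝕜 : Type*} [Fintype ι] [LinearOrder 𝕜]

/-- The indices at which `v` is positive. For `v` without zero entries this encodes the sign vector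
of `v` as a `Finset`, the form in which the Sauer–Shelah lemma applies. -/
def posSupport [Zero 𝕜] (v : ι → 𝕜) : Finset ι := {i | 0 < v i}

@[simp]
lemma mem_posSupport [Zero 𝕜] {v : ι → 𝕜} {i : ι} : i ∈ posSupport v ↔ 0 < v i := by
  simp [posSupport]

lemma forall_ne_zero_and_posSupport_eq_iff [Zero 𝕜] {v : ι → 𝕜} {S : Finset ι} :
    ((∀ i, v i ≠ 0) ∧ posSupport v = S) ↔ (∀ i ∈ S, 0 < v i) ∧ ∀ i ∉ S, v i < 0 := by
  constructor
  · rintro ⟨hv, rfl⟩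
    exact ⟨fun i hi ↦ mem_posSupport.1 hi,
      fun i hi ↦ (not_lt.1 (mt mem_posSupport.2 hi)).lt_of_ne (hv i)⟩
  · rintro ⟨hpos, hneg⟩
    refine ⟨fun i ↦ ?_, Finset.ext fun i ↦ ?_⟩ <;> by_cases hi : i ∈ S
    · exact (hpos i hi).ne'
    · exact (hneg i hi).ne
    · simp [hi, hpos i hi]
    · simp [hi, (hneg i hi).le]

lemma sum_mul_pos_of_posSupport_eq [Ring 𝕜] [IsStrictOrderedRing 𝕜] {c v : ι → 𝕜}
    (hc : c ≠ 0) (hv : ∀ i, v i ≠ 0) (hcv : posSupport v = posSupport c) :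
    0 < ∑ i, c i * v i := by
  have ⟨hpos, hneg⟩ := forall_ne_zero_and_posSupport_eq_iff.1 ⟨hv, hcv⟩
  have term_pos (i : ι) (hi : c i ≠ 0) : 0 < c i * v i := by
    rcases hi.lt_or_gt with hi | hi
    · exact mul_pos_of_neg_of_neg hi (hneg i (by simpa using hi.le))
    · exact mul_pos hi (hpos i (by simpa using hi))
  obtain ⟨j, hj⟩ := Function.ne_iff.1 hc
  refine Finset.sum_pos' (fun i _ ↦ ?_) ⟨j, Finset.mem_univ j, term_pos j hj⟩
  rcases eq_or_ne (c i) 0 with hi | hi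
  · simp [hi]
  · exact (term_pos i hi).le

end PosSupport

section AffineFamily

variable {ι 𝕜 V P : Type*} [Fintype ι] [Field 𝕜] [AddCommGroup V] [Module 𝕜 V] [AddTorsor V P]

lemma exists_ne_zero_sum_mul_eq_of_finrank_vectorSpan_lt_card (f : ι → P →ᵃ[𝕜] 𝕜) (C : Set P)
    [FiniteDimensional 𝕜 (vectorSpan 𝕜 C)]
    (hC : Module.finrank 𝕜 (vectorSpan 𝕜 C) < Fintype.card ι) :
    ∃ c : ι → 𝕜, c ≠ 0 ∧ ∀ x ∈ C, ∀ y ∈ C, ∑ i, c i * f i x = ∑ i, c i * f i y := by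
  let φ (i : ι) : Module.Dual 𝕜 (vectorSpan 𝕜 C) := (f i).linear.domRestrict (vectorSpan 𝕜 C)
  have not_linearIndependent : ¬ LinearIndependent 𝕜 φ := fun hφ ↦
    hC.not_ge (hφ.fintype_card_le_finrank.trans_eq Subspace.dual_finrank_eq)
  obtain ⟨c, hcφ, j, hj⟩ := Fintype.not_linearIndependent_iff.1 not_linearIndependent
  refine ⟨c, Function.ne_iff.2 ⟨j, hj⟩, fun x hx y hy ↦ sub_eq_zero.1 ?_⟩
  calc ∑ i, c i * f i x - ∑ i, c i * f i y
      = ∑ i, c i * (f i).linear (x -ᵥ y) := by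
        simp only [AffineMap.linearMap_vsub, vsub_eq_sub, mul_sub, Finset.sum_sub_distrib]
    _ = (∑ i, c i • φ i) ⟨x -ᵥ y, vsub_mem_vectorSpan 𝕜 hx hy⟩ := by simp [φ]
    _ = 0 := by rw [hcφ, LinearMap.zero_apply]

variable [LinearOrder 𝕜]

/-- The part of `C` left after removing the zero set of every `f i`, that is, the complement in `C`
of the arrangement of hyperplanes `f i = 0`. -/
def arrangementCompl (f : ι → P →ᵃ[𝕜] 𝕜) (C : Set P) : Set P := {x ∈ C | ∀ i, f i x ≠ 0}

/-- The sign vectors of the family `f` at the points of the arrangement complement in `C`, each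
encoded by its positive indices. -/
noncomputable def posPatterns (f : ι → P →ᵃ[𝕜] 𝕜) (C : Set P) : Finset (Finset ι) :=
  (Set.toFinite ((fun x ↦ posSupport (f · x)) '' arrangementCompl f C)).toFinset

lemma mem_posPatterns {f : ι → P →ᵃ[𝕜] 𝕜} {C : Set P} {S : Finset ι} :
    S ∈ posPatterns f C ↔ ∃ x ∈ arrangementCompl f C, posSupport (f · x) = S := by
  simp [posPatterns]

lemma posPatterns_restrict_eq_univ_of_shatters [DecidableEq ι] {f : ι → P →ᵃ[𝕜] 𝕜} {C : Set P}
    {T : Finset ι} (hT : (posPatterns f C).Shatters T) :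
    posPatterns (fun i : T ↦ f i) C = Finset.univ := by
  refine Finset.eq_univ_of_forall fun S ↦ ?_
  obtain ⟨U, hU, hTU⟩ := hT (Finset.map_subtype_subset S)
  obtain ⟨x, ⟨hxC, hx⟩, rfl⟩ := mem_posPatterns.1 hU
  refine mem_posPatterns.2 ⟨x, ⟨hxC, fun i ↦ hx i⟩, Finset.ext fun i ↦ ?_⟩
  simpa using Finset.ext_iff.1 hTU i

variable [IsStrictOrderedRing 𝕜]

lemma card_le_finrank_vectorSpan_of_posPatterns_eq_univ {f : ι → P →ᵃ[𝕜] 𝕜} {C : Set P}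
    [FiniteDimensional 𝕜 (vectorSpan 𝕜 C)] (hf : posPatterns f C = Finset.univ) :
    Fintype.card ι ≤ Module.finrank 𝕜 (vectorSpan 𝕜 C) := by
  by_contra! hlt
  obtain ⟨c, hc, hconst⟩ := exists_ne_zero_sum_mul_eq_of_finrank_vectorSpan_lt_card f C hlt
  have realized (d : ι → 𝕜) : ∃ x ∈ arrangementCompl f C, posSupport (f · x) = posSupport d :=
    mem_posPatterns.1 (hf ▸ Finset.mem_univ _)
  obtain ⟨x, ⟨hxC, hx⟩, hxc⟩ := realized c
  obtain ⟨y, ⟨hyC, hy⟩, hyc⟩ := realized (-c)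
  have sum_pos : 0 < ∑ i, c i * f i x := sum_mul_pos_of_posSupport_eq hc hx hxc
  have neg_sum_pos : 0 < ∑ i, -c i * f i y := sum_mul_pos_of_posSupport_eq (neg_ne_zero.2 hc) hy hyc
  simp only [neg_mul, Finset.sum_neg_distrib] at neg_sum_pos
  linarith [hconst x hxC y hyC]

lemma vcDim_posPatterns_le_finrank_vectorSpan [DecidableEq ι] (f : ι → P →ᵃ[𝕜] 𝕜) (C : Set P)
    [FiniteDimensional 𝕜 (vectorSpan 𝕜 C)] :
    (posPatterns f C).vcDim ≤ Module.finrank 𝕜 (vectorSpan 𝕜 C) := by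
  refine Finset.sup_le fun T hT ↦ ?_
  simpa using card_le_finrank_vectorSpan_of_posPatterns_eq_univ
    (posPatterns_restrict_eq_univ_of_shatters (Finset.mem_shatterer.1 hT))

lemma card_posPatterns_le_sum_choose (f : ι → P →ᵃ[𝕜] 𝕜) (C : Set P)
    [FiniteDimensional 𝕜 (vectorSpan 𝕜 C)] :
    (posPatterns f C).card ≤
      ∑ i ∈ Finset.range (Module.finrank 𝕜 (vectorSpan 𝕜 C) + 1), (Fintype.card ι).choose i := by
  classical
  calc (posPatterns f C).card
      ≤ (posPatterns f C).shatterer.card := Finset.card_le_card_shatterer _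
    _ ≤ ∑ i ∈ Finset.Iic (posPatterns f C).vcDim, (Fintype.card ι).choose i :=
        Finset.card_shatterer_le_sum_vcDim
    _ ≤ ∑ i ∈ Finset.range (Module.finrank 𝕜 (vectorSpan 𝕜 C) + 1), (Fintype.card ι).choose i := by
        refine Finset.sum_le_sum_of_subset fun i hi ↦ Finset.mem_range_succ_iff.2 ?_
        exact (Finset.mem_Iic.1 hi).trans (vcDim_posPatterns_le_finrank_vectorSpan f C)

end AffineFamily

section Components

lemma mk_connectedComponents_le_card_of_isPreconnected_fiber {α β : Type*} [TopologicalSpace α]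
    {X : Set α} {g : α → β} {A : Finset β} (hgA : Set.MapsTo g X A)
    (hg : ∀ b, IsPreconnected (X ∩ g ⁻¹' {b})) :
    Cardinal.mk (ConnectedComponents X) ≤ A.card := by
  have eq_of_fiber (x y : X) (hxy : g x = g y) : (x : ConnectedComponents X) = y := by
    have fiber_preconnected : IsPreconnected (Subtype.val ⁻¹' (g ⁻¹' {g y}) : Set X) := by
      rw [← Topology.IsInducing.subtypeVal.isPreconnected_image, Subtype.image_preimage_coe]
      exact hg (g y)
    exact ConnectedComponents.coe_eq_coe'.2
      (fiber_preconnected.subset_connectedComponent rfl hxy)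
  choose rep rep_spec using ConnectedComponents.surjective_coe (α := X)
  have injective : Function.Injective fun c ↦ (⟨g (rep c), hgA (rep c).2⟩ : A) := fun c d hcd ↦
    rep_spec c ▸ rep_spec d ▸ eq_of_fiber _ _ (congrArg Subtype.val hcd)
  simpa using Cardinal.lift_mk_le_lift_mk_of_injective injective

variable {ι E : Type*} [Fintype ι] [AddCommGroup E]

lemma convex_arrangementCompl_inter_posSupport_preimage {𝕜 : Type*} [Field 𝕜] [LinearOrder 𝕜]
    [IsStrictOrderedRing 𝕜] [Module 𝕜 E] (f : ι → E →ᵃ[𝕜] 𝕜) {C : Set E} (hC : Convex 𝕜 C)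
    (S : Finset ι) :
    Convex 𝕜 (arrangementCompl f C ∩ (fun x ↦ posSupport (f · x)) ⁻¹' {S}) := by
  have eq_halfspaces : arrangementCompl f C ∩ (fun x ↦ posSupport (f · x)) ⁻¹' {S} =
      C ∩ ((⋂ i ∈ S, f i ⁻¹' Set.Ioi 0) ∩ ⋂ i ∉ S, f i ⁻¹' Set.Iio 0) := by
    ext x
    simpa [arrangementCompl, and_assoc] using
      fun _ ↦ forall_ne_zero_and_posSupport_eq_iff (v := (f · x))
  rw [eq_halfspaces]
  exact hC.inter <|
    (convex_iInter₂ fun i _ ↦ (convex_Ioi 0).affine_preimage (f i)).inter <|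
      convex_iInter₂ fun i _ ↦ (convex_Iio 0).affine_preimage (f i)

variable [Module ℝ E] [TopologicalSpace E] [ContinuousAdd E] [ContinuousSMul ℝ E]

lemma mk_connectedComponents_arrangementCompl_le (f : ι → E →ᵃ[ℝ] ℝ) {C : Set E}
    (hC : Convex ℝ C) [FiniteDimensional ℝ (vectorSpan ℝ C)] :
    Cardinal.mk (ConnectedComponents (arrangementCompl f C)) ≤
      ((∑ i ∈ Finset.range (Module.finrank ℝ (vectorSpan ℝ C) + 1),
        (Fintype.card ι).choose i : ℕ) : Cardinal) :=
  (mk_connectedComponents_le_card_of_isPreconnected_fiber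
    (fun x hx ↦ mem_posPatterns.2 ⟨x, hx, rfl⟩)
    fun S ↦ (convex_arrangementCompl_inter_posSupport_preimage f hC S).isPreconnected).trans <|
      Nat.cast_le.2 (card_posPatterns_le_sum_choose f C)

end Components

theorem hyperplane_arrangement_components_in_subspace_general {E : Type*} [AddCommGroup E]
    [Module ℝ E] [TopologicalSpace E] [ContinuousAdd E] [ContinuousSMul ℝ E]
    {C : Set E} (hC : Convex ℝ C) [FiniteDimensional ℝ (vectorSpan ℝ C)]
    (H : Finset (Set E)) (hH : ∀ Hp ∈ H, ∃ f : E →ᵃ[ℝ] ℝ, Hp = {x | f x = 0}) :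
    Cardinal.mk (ConnectedComponents ↥(C \ ⋃₀ (H : Set (Set E)))) ≤
      ((∑ i ∈ Finset.range (Module.finrank ℝ (vectorSpan ℝ C) + 1), H.card.choose i : ℕ) :
        Cardinal) := by
  choose f hf using fun Hp : H ↦ hH Hp Hp.2
  have compl_eq : C \ ⋃₀ (H : Set (Set E)) = arrangementCompl f C := by
    have hfx (x : E) (Hp : H) : x ∈ (Hp : Set E) ↔ f Hp x = 0 := by rw [hf Hp]; rfl
    ext x
    simp [arrangementCompl, ← hfx]
  rw [compl_eq, ← Fintype.card_coe]
  exact mk_connectedComponents_arrangementCompl_le f hC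

lemma IsAffineHyperplane.exists_affineMap {k : ℕ} {H : Set (EuclideanSpace ℝ (Fin k))}
    (hH : IsAffineHyperplane H) :
    ∃ f : EuclideanSpace ℝ (Fin k) →ᵃ[ℝ] ℝ, H = {x | f x = 0} := by
  obtain ⟨a, b, -, rfl⟩ := hH
  exact ⟨(innerₛₗ ℝ a).toAffineMap - AffineMap.const ℝ _ b, by simp [sub_eq_zero]⟩

lemma vectorSpan_coe_submodule {𝕜 E : Type*} [Ring 𝕜] [AddCommGroup E] [Module 𝕜 E]
    (V : Submodule 𝕜 E) : vectorSpan 𝕜 (V : Set E) = V :=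
  V.toAffineSubspace.direction_eq_vectorSpan.symm.trans V.toAffineSubspace_direction

/-- Within an `s`-dimensional subspace `V ⊆ ℝ^k`, removing `h` affine hyperplanes
leaves at most `∑_{i=0}^{s} C(h,i)` connected components. -/
theorem hyperplane_arrangement_components_in_subspace {k h s : ℕ}
    (V : Submodule ℝ (EuclideanSpace ℝ (Fin k))) (hV : Module.finrank ℝ V = s)
    (H : Finset (Set (EuclideanSpace ℝ (Fin k)))) (hcard : H.card = h)
    (hH : ∀ Hp ∈ H, IsAffineHyperplane Hp) :
    Cardinal.mk (ConnectedComponents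
        ↥((V : Set (EuclideanSpace ℝ (Fin k))) \ ⋃₀ (H : Set (Set (EuclideanSpace ℝ (Fin k)))))) ≤
      ((∑ i ∈ Finset.range (s + 1), h.choose i : ℕ) : Cardinal) := by
  have bound := hyperplane_arrangement_components_in_subspace_general V.convex H
    fun Hp hHp ↦ (hH Hp hHp).exists_affineMap
  rwa [vectorSpan_coe_submodule, hV, hcard] at bound
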